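/- Let X and Y be real Hilbert spaces, let T_n (n ∈ ℕ) and T be bounded linear maps from X to Y that are bounded below (isomorphisms onto their ranges), and let Q_n and Q be bounded idempotent operators on X, such that T_n → T and Q_n → Q in the operator norms. Then the subspaces range(T_n ∘ Q_n) and range(T ∘ Q) are closed, and the orthogonal projection of Y onto range(T_n ∘ Q_n) converges in the operator norm to the orthogonal projection of Y onto range(T ∘ Q). In particular (case Q_n = Q = I), the orthogonal projection onto range(T_n) converges in operator norm to the orthogonal projection onto range(T). -/

import Mathlib

/-!
If `A` and `B` are close and every vector of `range A` has an `A`-preimage of comparable norm, then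
moving `A u` to `B u` shows that `range A` is nearly contained in `range B`. When this holds in both
directions, the orthogonal projections `P` onto `range A` and `R` onto `range B` are close: `P - R`
is `(1 - R)P - R(1 - P)`, whose two terms take orthogonal values, and the second is controlled by
duality. For `A = TQ` with `T` bounded below and `Q` idempotent, `Q x` is a preimage of `T Q x` of
controlled norm, and the lower bound of `T` survives small perturbations, so the estimates are
uniform along the sequence.
-/

open Filter

/-- `P` is the orthogonal projection of `Y` onto the subspace `E`. -/
def IsOrthoProjOn {Y : Type*} [NormedAddCommGroup Y] [InnerProductSpace ℝ Y]
    (E : Submodule ℝ Y) (P : Y →L[ℝ] Y) : Prop :=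
  ∀ y : Y, P y ∈ E ∧ y - P y ∈ Eᗮ

open Topology

section NormedSpace

variable {𝕜 X Y : Type*} [NontriviallyNormedField 𝕜] [NormedAddCommGroup X] [NormedSpace 𝕜 X]
  [NormedAddCommGroup Y] [NormedSpace 𝕜 Y]

theorem isClosed_range_comp_of_isIdempotentElem [CompleteSpace X] {T : X →L[𝕜] Y} {Q : X →L[𝕜] X}
    (hT : ∃ c > 0, ∀ x, c * ‖x‖ ≤ ‖T x‖) (hQ : IsIdempotentElem Q) :
    IsClosed ((T.comp Q).range : Set Y) := by
  obtain ⟨c, hc, hT⟩ := hT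
  have hT_anti : AntilipschitzWith (Real.toNNReal c⁻¹) T :=
    T.antilipschitz_of_bound fun x => by
      rw [Real.coe_toNNReal _ (by positivity), inv_mul_eq_div, le_div_iff₀' hc]
      exact hT x
  have hTQ_closed : IsClosed (T '' Q.range) :=
    (hT_anti.isClosedEmbedding T.uniformContinuous).isClosedMap _
      (ContinuousLinearMap.IsIdempotentElem.isClosed_range hQ)
  rwa [ContinuousLinearMap.toLinearMap_comp, LinearMap.range_comp]

theorem eventually_nhds_mul_norm_le_norm_apply {T : X →L[𝕜] Y} {b c : ℝ} (hbc : b < c)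
    (hT : ∀ x, c * ‖x‖ ≤ ‖T x‖) : ∀ᶠ S in 𝓝 T, ∀ x, b * ‖x‖ ≤ ‖S x‖ := by
  filter_upwards [Metric.ball_mem_nhds T (sub_pos.2 hbc)] with S hS x
  rw [mem_ball_iff_norm'] at hS
  calc
    b * ‖x‖ = c * ‖x‖ - (c - b) * ‖x‖ := by ring
    _ ≤ ‖T x‖ - ‖(T - S) x‖ := sub_le_sub (hT x) ((T - S).le_of_opNorm_le hS.le x)
    _ ≤ ‖S x‖ := by simpa using norm_sub_norm_le (T x) ((T - S) x)

/-- Every vector `y` of the range of `A` has a preimage `u` with `c * ‖u‖ ≤ ‖y‖`. For `0 < c` this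
is a lower bound `c` on the reduced minimum modulus of `A`, in the form where the distance to the
kernel is attained. It replaces a lower bound on `‖A x‖ / ‖x‖` when `A` is not injective. -/
def HasPreimageBound (A : X →L[𝕜] Y) (c : ℝ) : Prop :=
  ∀ y ∈ A.range, ∃ u, A u = y ∧ c * ‖u‖ ≤ ‖y‖

theorem HasPreimageBound.comp_of_isIdempotentElem {T : X →L[𝕜] Y} {Q : X →L[𝕜] X} {c : ℝ}
    (hT : ∀ x, c * ‖x‖ ≤ ‖T x‖) (hQ : IsIdempotentElem Q) : HasPreimageBound (T.comp Q) c := by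
  rintro _ ⟨x, rfl⟩
  exact ⟨Q x, congrArg T (DFunLike.congr_fun hQ x), hT (Q x)⟩

end NormedSpace

section OrthogonalProjection

variable {𝕜 Y : Type*} [RCLike 𝕜] [NormedAddCommGroup Y] [InnerProductSpace 𝕜 Y]

section Gap

variable {U V : Submodule 𝕜 Y} [U.HasOrthogonalProjection] [V.HasOrthogonalProjection] {ε : ℝ}

theorem norm_starProjection_le_of_mem_orthogonal (hε : 0 ≤ ε)
    (hV : ∀ v ∈ V, ‖v - U.starProjection v‖ ≤ ε * ‖v‖) {z : Y} (hz : z ∈ Uᗮ) :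
    ‖V.starProjection z‖ ≤ ε * ‖z‖ := by
  set v := V.starProjection z with hv
  have hvV : v ∈ V := V.starProjection_apply_mem z
  have inner_eq : inner 𝕜 (v - U.starProjection v) z = inner 𝕜 v v := by
    rw [inner_sub_left, U.inner_right_of_mem_orthogonal (U.starProjection_apply_mem v) hz, sub_zero,
      hv, V.inner_starProjection_left_eq_right, V.inner_starProjection_left_eq_right,
      V.starProjection_eq_self_iff.2 hvV]
  have norm_mul_le : ‖v‖ * ‖v‖ ≤ ‖v‖ * (ε * ‖z‖) :=
    calc
      ‖v‖ * ‖v‖ = ‖inner 𝕜 (v - U.starProjection v) z‖ := by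
        rw [inner_eq, inner_self_eq_norm_sq_to_K, norm_pow, RCLike.norm_ofReal, abs_norm, sq]
      _ ≤ ‖v - U.starProjection v‖ * ‖z‖ := norm_inner_le_norm _ _
      _ ≤ ε * ‖v‖ * ‖z‖ := by gcongr; exact hV v hvV
      _ = ‖v‖ * (ε * ‖z‖) := by ring
  rcases (norm_nonneg v).eq_or_lt with norm_eq_zero | norm_pos
  · rw [← norm_eq_zero]
    positivity
  · exact le_of_mul_le_mul_left norm_mul_le norm_pos

theorem norm_starProjection_sub_starProjection_le (hε : 0 ≤ ε)
    (hU : ∀ u ∈ U, ‖u - V.starProjection u‖ ≤ ε * ‖u‖)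
    (hV : ∀ v ∈ V, ‖v - U.starProjection v‖ ≤ ε * ‖v‖) :
    ‖U.starProjection - V.starProjection‖ ≤ ε := by
  refine ContinuousLinearMap.opNorm_le_bound _ hε fun y => ?_
  set u := U.starProjection y
  have hu : u ∈ U := U.starProjection_apply_mem y
  have hyu : y - u ∈ Uᗮ := U.sub_starProjection_mem_orthogonal y
  have decomposition : (U.starProjection - V.starProjection) y =
      (u - V.starProjection u) - V.starProjection (y - u) := by
    simp [u]
  have orthogonal : inner 𝕜 (u - V.starProjection u) (V.starProjection (y - u)) = 0 :=
    V.starProjection_inner_eq_zero _ _ (V.starProjection_apply_mem _)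
  have pythagoras : ‖y‖ ^ 2 = ‖u‖ ^ 2 + ‖y - u‖ ^ 2 := by
    rw [U.norm_sq_eq_add_norm_sq_starProjection y, Submodule.starProjection_orthogonal_val]
  refine le_of_sq_le_sq ?_ (by positivity)
  calc
    ‖(U.starProjection - V.starProjection) y‖ ^ 2
        = ‖u - V.starProjection u‖ ^ 2 + ‖V.starProjection (y - u)‖ ^ 2 := by
      rw [decomposition, norm_sub_sq (𝕜 := 𝕜), orthogonal, map_zero, mul_zero, sub_zero]
    _ ≤ (ε * ‖u‖) ^ 2 + (ε * ‖y - u‖) ^ 2 := by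
      gcongr
      · exact hU u hu
      · exact norm_starProjection_le_of_mem_orthogonal hε hV hyu
    _ = (ε * ‖y‖) ^ 2 := by rw [mul_pow, mul_pow, mul_pow, pythagoras, mul_add]

end Gap

variable {X : Type*} [NormedAddCommGroup X] [NormedSpace 𝕜 X]

theorem HasPreimageBound.norm_sub_starProjection_range_le {A B : X →L[𝕜] Y}
    [B.range.HasOrthogonalProjection] {c : ℝ} (hA : HasPreimageBound A c) (hc : 0 < c) {y : Y}
    (hy : y ∈ A.range) : ‖y - B.range.starProjection y‖ ≤ ‖A - B‖ / c * ‖y‖ := by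
  obtain ⟨u, rfl, hu⟩ := hA y hy
  calc
    ‖A u - B.range.starProjection (A u)‖ ≤ ‖A u - B u‖ := by
      rw [B.range.starProjection_minimal]
      exact ciInf_le ⟨0, Set.forall_mem_range.2 fun _ => norm_nonneg _⟩ (⟨B u, u, rfl⟩ : B.range)
    _ ≤ ‖A - B‖ * ‖u‖ := (A - B).le_opNorm u
    _ ≤ ‖A - B‖ * (‖A u‖ / c) := by gcongr; rwa [le_div_iff₀' hc]
    _ = ‖A - B‖ / c * ‖A u‖ := by ring

theorem HasPreimageBound.norm_starProjection_range_sub_le {A B : X →L[𝕜] Y}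
    [A.range.HasOrthogonalProjection] [B.range.HasOrthogonalProjection] {c : ℝ}
    (hA : HasPreimageBound A c) (hB : HasPreimageBound B c) (hc : 0 < c) :
    ‖A.range.starProjection - B.range.starProjection‖ ≤ ‖A - B‖ / c :=
  norm_starProjection_sub_starProjection_le (by positivity)
    (fun _ hy => hA.norm_sub_starProjection_range_le hc hy)
    (fun _ hy => norm_sub_rev A B ▸ hB.norm_sub_starProjection_range_le hc hy)

theorem tendsto_starProjection_range {ι : Type*} {l : Filter ι} {A : ι → X →L[𝕜] Y}
    {A₀ : X →L[𝕜] Y} [∀ i, (A i).range.HasOrthogonalProjection] [A₀.range.HasOrthogonalProjection]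
    {c : ℝ} (hc : 0 < c) (hA : ∀ᶠ i in l, HasPreimageBound (A i) c) (hA₀ : HasPreimageBound A₀ c)
    (hlim : Tendsto A l (𝓝 A₀)) :
    Tendsto (fun i => (A i).range.starProjection) l (𝓝 A₀.range.starProjection) := by
  rw [tendsto_iff_norm_sub_tendsto_zero] at hlim ⊢
  refine squeeze_zero' (.of_forall fun _ => norm_nonneg _) ?_ (by simpa using hlim.div_const c)
  filter_upwards [hA] with i hAi
  exact hAi.norm_starProjection_range_sub_le hA₀ hc

theorem tendsto_starProjection_range_comp {ι : Type*} {l : Filter ι}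
    {T : ι → X →L[𝕜] Y} {T₀ : X →L[𝕜] Y} {Q : ι → X →L[𝕜] X} {Q₀ : X →L[𝕜] X}
    [∀ i, ((T i).comp (Q i)).range.HasOrthogonalProjection]
    [(T₀.comp Q₀).range.HasOrthogonalProjection]
    (hT₀ : ∃ c > 0, ∀ x, c * ‖x‖ ≤ ‖T₀ x‖)
    (hQ : ∀ i, IsIdempotentElem (Q i)) (hQ₀ : IsIdempotentElem Q₀)
    (hTlim : Tendsto T l (𝓝 T₀)) (hQlim : Tendsto Q l (𝓝 Q₀)) :
    Tendsto (fun i => ((T i).comp (Q i)).range.starProjection) l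
      (𝓝 (T₀.comp Q₀).range.starProjection) := by
  obtain ⟨c, hc, hT₀⟩ := hT₀
  have bounded_below := eventually_nhds_mul_norm_le_norm_apply (half_lt_self hc) hT₀
  have composition : Tendsto (fun i => (T i).comp (Q i)) l (𝓝 (T₀.comp Q₀)) :=
    ((continuous_fst.clm_comp continuous_snd).tendsto (T₀, Q₀)).comp (hTlim.prodMk_nhds hQlim)
  exact tendsto_starProjection_range (half_pos hc)
    ((hTlim.eventually bounded_below).mono fun i hTi => .comp_of_isIdempotentElem hTi (hQ i))
    (.comp_of_isIdempotentElem bounded_below.self_of_nhds hQ₀) composition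

theorem eq_starProjection_of_forall_mem {U : Submodule 𝕜 Y} [U.HasOrthogonalProjection]
    {P : Y →L[𝕜] Y} (hP : ∀ y, P y ∈ U ∧ y - P y ∈ Uᗮ) : P = U.starProjection :=
  ContinuousLinearMap.ext fun y =>
    (Submodule.eq_starProjection_of_mem_orthogonal (hP y).1 (hP y).2).symm

end OrthogonalProjection

theorem stmt3_general {𝕜 X Y ι : Type*} [RCLike 𝕜] [NormedAddCommGroup X] [NormedSpace 𝕜 X]
    [CompleteSpace X] [NormedAddCommGroup Y] [InnerProductSpace 𝕜 Y] {l : Filter ι}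
    (T : ι → X →L[𝕜] Y) (T₀ : X →L[𝕜] Y) (Q : ι → X →L[𝕜] X) (Q₀ : X →L[𝕜] X)
    (hT : ∀ i, ∃ c > 0, ∀ x, c * ‖x‖ ≤ ‖T i x‖) (hT₀ : ∃ c > 0, ∀ x, c * ‖x‖ ≤ ‖T₀ x‖)
    (hQ : ∀ i, IsIdempotentElem (Q i)) (hQ₀ : IsIdempotentElem Q₀)
    (hTlim : Tendsto T l (𝓝 T₀)) (hQlim : Tendsto Q l (𝓝 Q₀)) :
    (∀ i, IsClosed (((T i).comp (Q i)).range : Set Y)) ∧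
    IsClosed ((T₀.comp Q₀).range : Set Y) ∧
    ∀ (P : ι → Y →L[𝕜] Y) (P₀ : Y →L[𝕜] Y),
      (∀ i y, P i y ∈ ((T i).comp (Q i)).range ∧ y - P i y ∈ ((T i).comp (Q i)).rangeᗮ) →
      (∀ y, P₀ y ∈ (T₀.comp Q₀).range ∧ y - P₀ y ∈ (T₀.comp Q₀).rangeᗮ) →
      Tendsto P l (𝓝 P₀) := by
  refine ⟨fun i => isClosed_range_comp_of_isIdempotentElem (hT i) (hQ i),
    isClosed_range_comp_of_isIdempotentElem hT₀ hQ₀, fun P P₀ hP hP₀ => ?_⟩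
  have (i : ι) : ((T i).comp (Q i)).range.HasOrthogonalProjection := ⟨fun y => ⟨P i y, hP i y⟩⟩
  have : (T₀.comp Q₀).range.HasOrthogonalProjection := ⟨fun y => ⟨P₀ y, hP₀ y⟩⟩
  obtain rfl := funext fun i => eq_starProjection_of_forall_mem (hP i)
  obtain rfl := eq_starProjection_of_forall_mem hP₀
  exact tendsto_starProjection_range_comp hT₀ hQ hQ₀ hTlim hQlim

/-- If `Tₙ → T` (bounded-below maps between real Hilbert spaces) and `Qₙ → Q`
(idempotents) in operator norm, then the ranges of `Tₙ ∘ Qₙ` and `T ∘ Q` are closed,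
and the orthogonal projections onto `range (Tₙ ∘ Qₙ)` converge in operator norm
to the orthogonal projection onto `range (T ∘ Q)`. -/
theorem stmt3 {X Y : Type*} [NormedAddCommGroup X] [InnerProductSpace ℝ X] [CompleteSpace X]
    [NormedAddCommGroup Y] [InnerProductSpace ℝ Y] [CompleteSpace Y]
    (T : ℕ → X →L[ℝ] Y) (T₀ : X →L[ℝ] Y)
    (Q : ℕ → X →L[ℝ] X) (Q₀ : X →L[ℝ] X)
    (hTn : ∀ n, ∃ c > 0, ∀ x : X, c * ‖x‖ ≤ ‖T n x‖)
    (hT₀ : ∃ c > 0, ∀ x : X, c * ‖x‖ ≤ ‖T₀ x‖)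
    (hQn : ∀ n, (Q n).comp (Q n) = Q n) (hQ₀ : Q₀.comp Q₀ = Q₀)
    (hTconv : Tendsto T atTop (nhds T₀)) (hQconv : Tendsto Q atTop (nhds Q₀)) :
    (∀ n, IsClosed ((LinearMap.range ((T n).comp (Q n) : X →ₗ[ℝ] Y) : Submodule ℝ Y) : Set Y)) ∧
    IsClosed ((LinearMap.range (T₀.comp Q₀ : X →ₗ[ℝ] Y) : Submodule ℝ Y) : Set Y) ∧
    ∀ (P : ℕ → Y →L[ℝ] Y) (P₀ : Y →L[ℝ] Y),
      (∀ n, IsOrthoProjOn (LinearMap.range ((T n).comp (Q n) : X →ₗ[ℝ] Y)) (P n)) →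
      IsOrthoProjOn (LinearMap.range (T₀.comp Q₀ : X →ₗ[ℝ] Y)) P₀ →
      Tendsto P atTop (nhds P₀) :=
  stmt3_general T T₀ Q Q₀ hTn hT₀ hQn hQ₀ hTconv hQconv
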